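/- For the elephant random walk with memory parameter p ∈ [0, 1) on a Cayley graph that is the d-regular tree T_d (d ≥ 3), for any m ∈ [1, 2) there exists a constant C > 0 such that E|Ξ_n|^m ≤ C · r_n^{−m} for all n ≥ 1, where r_n = n^{1/2} if p < p_d, r_n = (n / log n)^{1/2} if p = p_d, and r_n = n^{d(1−p)/(d−1)} if p > p_d, with p_d = (d + 1)/(2d). -/

import Mathlib

open MeasureTheory ProbabilityTheory Filter

noncomputable section

/-- The Cayley graph of a group with respect to a finite set of generators. -/
def cayleyGraph {G : Type*} [Group G] (S : Finset G) : SimpleGraph G where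
  Adj x y := x ≠ y ∧ (y * x⁻¹ ∈ S ∨ x * y⁻¹ ∈ S)
  symm := by
    constructor
    rintro x y ⟨h1, h2⟩
    refine ⟨h1.symm, ?_⟩
    rcases h2 with h | h
    · exact Or.inr h
    · exact Or.inl h
  loopless := ⟨fun x h => h.1 rfl⟩

/-- The elephant random walk (ERW) with memory parameter `p` on the Cayley graph of a
group `G` with respect to a symmetric generating set `S` of cardinality `d`, not
containing the identity, whose Cayley graph is a tree (hence the `d`-regular tree
`T_d`).  The steps are `g 1, g 2, …` (the value of `g 0` is irrelevant).  The law of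
the process is characterised by: `g 1` is uniform on `S`, and, conditionally on the
first `n` steps being `s 1, …, s n`, the next step `g (n+1)` equals `a ∈ S` with
probability `p * N/n + ((1-p)/(d-1)) * (n-N)/n`, where `N = #{1 ≤ k ≤ n : s k = a}`;
this is precisely the probability that the walker, recalling a uniform past epoch
`D ∈ {1, …, n}`, repeats `g D` with probability `p` and takes any given other step
with probability `(1-p)/(d-1)`. -/
structure ERW (G : Type*) [Group G] [DecidableEq G] (d : ℕ) (p : ℝ)
    (Ω : Type*) [MeasurableSpace Ω] (P : Measure Ω) where
  S : Finset G
  card_S : S.card = d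
  symm_S : ∀ s ∈ S, s⁻¹ ∈ S
  one_not_mem : (1 : G) ∉ S
  tree : (cayleyGraph S).IsTree
  g : ℕ → Ω → G
  meas_g : ∀ n a, MeasurableSet {ω | g n ω = a}
  mem_S : ∀ n, 1 ≤ n → ∀ ω, g n ω ∈ S
  init : ∀ a ∈ S, (P {ω | g 1 ω = a}).toReal = 1 / d
  update : ∀ n, 1 ≤ n → ∀ s : ℕ → G, ∀ a ∈ S,
    (P ({ω | ∀ k ∈ Finset.Icc 1 n, g k ω = s k} ∩ {ω | g (n + 1) ω = a})).toReal
      = (p * ((((Finset.Icc 1 n).filter fun k => s k = a).card : ℝ) / n)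
          + (1 - p) / ((d : ℝ) - 1)
            * (((n : ℝ) - (((Finset.Icc 1 n).filter fun k => s k = a).card : ℝ)) / n))
        * (P {ω | ∀ k ∈ Finset.Icc 1 n, g k ω = s k}).toReal

namespace ERW

variable {G : Type*} [Group G] [DecidableEq G] {d : ℕ} {p : ℝ}
  {Ω : Type*} [MeasurableSpace Ω] {P : Measure Ω}

/-- The position `w n = g n ⋯ g 1` of the walk at time `n`. -/
def pos (E : ERW G d p Ω P) : ℕ → Ω → G
  | 0 => fun _ => 1
  | n + 1 => fun ω => E.g (n + 1) ω * E.pos n ω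

/-- `Δ n`: the (word-metric) distance of the walker from the root at time `n`. -/
def dist (E : ERW G d p Ω P) (n : ℕ) (ω : Ω) : ℕ :=
  (cayleyGraph E.S).dist 1 (E.pos n ω)

/-- `N n a`: the number of `a`-steps taken by time `n`. -/
def count (E : ERW G d p Ω P) (a : G) (n : ℕ) (ω : Ω) : ℕ :=
  ((Finset.Icc 1 n).filter fun k => E.g k ω = a).card

/-- `γ n`: the unique step decreasing the distance to the root by 1
(a junk value if the walker is at the root). -/
def gammaStep (E : ERW G d p Ω P) (n : ℕ) (ω : Ω) : G :=
  @Classical.epsilon G ⟨1⟩ fun s =>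
    s ∈ E.S ∧ (cayleyGraph E.S).dist 1 (s * E.pos n ω) + 1 = E.dist n ω

/-- `ℓ n = N n (γ n)` if the walker is away from the root, and `0` otherwise. -/
def ell (E : ERW G d p Ω P) (n : ℕ) (ω : Ω) : ℕ :=
  if E.pos n ω = 1 then 0 else E.count (E.gammaStep n ω) n ω

/-- `Ξ n = (1/n) ∑_{k=0}^{n-1} (ℓ k / k - 1(Δ k > 0)/d)` (with the convention
`ℓ 0 / 0 = 0`, automatic since division by zero yields zero). -/
def Xi (E : ERW G d p Ω P) (n : ℕ) (ω : Ω) : ℝ :=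
  (1 / n) * ∑ k ∈ Finset.range n,
    ((E.ell k ω : ℝ) / k - (if 0 < E.dist k ω then 1 else 0) / d)

/-- The natural filtration `F n` generated by the steps up to time `n`. -/
def filt (E : ERW G d p Ω P) (n : ℕ) : MeasurableSpace Ω :=
  ⨆ k ∈ Finset.Icc 1 n, MeasurableSpace.comap (E.g k) ⊤

/-- `G n = E[Δ (n+1) - Δ n | F n]`. -/
def drift (E : ERW G d p Ω P) (n : ℕ) : Ω → ℝ :=
  P[fun ω => ((E.dist (n + 1) ω : ℝ) - (E.dist n ω : ℝ)) | E.filt n]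

/-- The martingale differences `Y k = Δ k - Δ (k-1) - G (k-1)`. -/
def mdiff (E : ERW G d p Ω P) (k : ℕ) (ω : Ω) : ℝ :=
  (E.dist k ω : ℝ) - (E.dist (k - 1) ω : ℝ) - E.drift (k - 1) ω

/-- The martingale `M n = ∑_{k=1}^n Y k`. -/
def mart (E : ERW G d p Ω P) (n : ℕ) (ω : Ω) : ℝ :=
  ∑ k ∈ Finset.Icc 1 n, E.mdiff k ω

end ERW

/-- The rate `r n`: `√n` in the subcritical regime `p < p_d = (d+1)/(2d)`,
`√(n / log n)` in the critical regime `p = p_d`, and `n ^ (d(1-p)/(d-1))` in the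
supercritical regime `p > p_d`. -/
def rate (p : ℝ) (d : ℕ) (n : ℕ) : ℝ :=
  if p < ((d : ℝ) + 1) / (2 * d) then Real.sqrt n
  else if p = ((d : ℝ) + 1) / (2 * d) then Real.sqrt ((n : ℝ) / Real.log n)
  else (n : ℝ) ^ ((d : ℝ) * (1 - p) / ((d : ℝ) - 1))


namespace ERW

variable {G : Type*} [Group G] [DecidableEq G] {d : ℕ} {p : ℝ}
  {Ω : Type*} [MeasurableSpace Ω] {P : Measure Ω}

/-- The normalised memory parameter. -/
def alpha (d : ℕ) (p : ℝ) : ℝ := ((d : ℝ) * p - 1) / ((d : ℝ) - 1)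

/-- The centred count. -/
def cen (E : ERW G d p Ω P) (a : G) (n : ℕ) (ω : Ω) : ℝ := (E.count a n ω : ℝ) - n / d

lemma count_succ (E : ERW G d p Ω P) (a : G) (n : ℕ) (ω : Ω) :
    (E.count a (n + 1) ω : ℝ) = E.count a n ω + {ω | E.g (n + 1) ω = a}.indicator 1 ω := by
  unfold count
  rw [← Finset.insert_Icc_right_eq_Icc_add_one (by omega : 1 ≤ n + 1), Finset.filter_insert]
  by_cases h : E.g (n + 1) ω = a
  · simp [h]
  · simp [h]

lemma count_le (E : ERW G d p Ω P) (a : G) (n : ℕ) (ω : Ω) : E.count a n ω ≤ n := by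
  unfold count
  refine (Finset.card_filter_le _ _).trans ?_
  simp

lemma meas_count (E : ERW G d p Ω P) (a : G) (n : ℕ) :
    Measurable (fun ω => (E.count a n ω : ℝ)) := by
  induction n with
  | zero => simp [count]
  | succ n ih =>
    simp only [count_succ]
    exact ih.add (measurable_one.indicator (E.meas_g _ _))

lemma meas_cen (E : ERW G d p Ω P) (a : G) (n : ℕ) : Measurable (E.cen a n) :=
  (E.meas_count a n).sub_const _

lemma abs_cen_le (E : ERW G d p Ω P) (a : G) (n : ℕ) (ω : Ω) : |E.cen a n ω| ≤ n := by
  have h1 : (E.count a n ω : ℝ) ≤ n := by exact_mod_cast E.count_le a n ω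
  have h0 : (0 : ℝ) ≤ E.count a n ω := by positivity
  have h2 : (n : ℝ) / d ≤ n := by
    rcases Nat.eq_zero_or_pos d with h | h
    · simp [h]
    · exact div_le_self (by positivity) (by exact_mod_cast h)
  have h3 : (0 : ℝ) ≤ n / d := by positivity
  unfold cen
  rw [abs_le]; constructor <;> linarith

lemma integrable_cen_sq [IsProbabilityMeasure P] (E : ERW G d p Ω P) (a : G) (n : ℕ) :
    Integrable (fun ω => (E.cen a n ω) ^ 2) P := by
  refine Integrable.of_bound ((E.meas_cen a n).pow_const 2).aestronglyMeasurable ((n : ℝ) ^ 2) ?_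
  refine ae_of_all _ fun ω => ?_
  rw [Real.norm_eq_abs, abs_pow]
  exact pow_le_pow_left₀ (abs_nonneg _) (E.abs_cen_le a n ω) 2

/-- the history up to time `n` -/
def hist (E : ERW G d p Ω P) (n : ℕ) (ω : Ω) : Fin n → E.S :=
  fun i => ⟨E.g (i + 1) ω, E.mem_S _ (by omega) ω⟩

/-- extension of a history to a sequence -/
def ext (E : ERW G d p Ω P) (n : ℕ) (s : Fin n → E.S) (k : ℕ) : G :=
  if h : k - 1 < n then (s ⟨k - 1, h⟩ : G) else 1

lemma hist_eq_iff (E : ERW G d p Ω P) (n : ℕ) (s : Fin n → E.S) :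
    {ω | E.hist n ω = s} = {ω | ∀ k ∈ Finset.Icc 1 n, E.g k ω = E.ext n s k} := by
  ext ω
  simp only [Set.mem_ofPred_eq, Finset.mem_Icc]
  constructor
  · rintro rfl k ⟨h1, h2⟩
    have : k - 1 < n := by omega
    simp [ext, this, hist, Nat.sub_add_cancel h1]
  · intro h
    funext i
    apply Subtype.ext
    have := h (i + 1) ⟨by omega, by omega⟩
    simpa [ext, hist] using this

lemma meas_hist (E : ERW G d p Ω P) (n : ℕ) (s : Fin n → E.S) :
    MeasurableSet {ω | E.hist n ω = s} := by
  rw [hist_eq_iff]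
  have : {ω | ∀ k ∈ Finset.Icc 1 n, E.g k ω = E.ext n s k}
      = ⋂ k ∈ Finset.Icc 1 n, {ω | E.g k ω = E.ext n s k} := by
    ext; simp
  rw [this]
  exact Finset.measurableSet_biInter _ fun k _ => E.meas_g _ _

lemma count_hist (E : ERW G d p Ω P) (a : G) (n : ℕ) (s : Fin n → E.S) (ω : Ω)
    (h : E.hist n ω = s) :
    ((Finset.Icc 1 n).filter fun k => E.ext n s k = a).card = E.count a n ω := by
  have h' : ω ∈ {ω | E.hist n ω = s} := h
  rw [hist_eq_iff] at h'
  unfold count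
  congr 1
  apply Finset.filter_congr
  intro k hk
  rw [h' k hk]

lemma integral_hist [IsProbabilityMeasure P] (E : ERW G d p Ω P) (n : ℕ)
    (φ : (Fin n → E.S) → ℝ) (A : Set Ω) (hA : MeasurableSet A) :
    ∫ ω, φ (E.hist n ω) * A.indicator 1 ω ∂P
      = ∑ s, φ s * (P ({ω | E.hist n ω = s} ∩ A)).toReal := by
  have : ∀ ω, φ (E.hist n ω) * A.indicator 1 ω
      = ∑ s, ({ω | E.hist n ω = s} ∩ A).indicator (fun _ => φ s) ω := by
    intro ω
    rw [Finset.sum_eq_single (E.hist n ω)]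
    · by_cases h : ω ∈ A <;> simp [h]
    · intro s _ hs
      simp [Ne.symm hs]
    · simp
  simp_rw [this]
  rw [integral_finsetSum]
  · refine Finset.sum_congr rfl fun s _ => ?_
    rw [integral_indicator_const _ ((E.meas_hist n s).inter hA)]
    simp [Measure.real, mul_comm]
  · intro s _
    exact (integrable_const _).indicator ((E.meas_hist n s).inter hA)

lemma cond_step [IsProbabilityMeasure P] (E : ERW G d p Ω P) (hd : 3 ≤ d) (n : ℕ) (hn : 1 ≤ n)
    (a : G) (ha : a ∈ E.S) :
    ∫ ω, E.cen a n ω * ({ω | E.g (n + 1) ω = a}.indicator 1 ω) ∂P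
      = ∫ ω, E.cen a n ω * (alpha d p / n * E.cen a n ω + 1 / d) ∂P := by
  set c : (Fin n → E.S) → ℝ := fun s =>
    ((((Finset.Icc 1 n).filter fun k => E.ext n s k = a).card : ℕ) : ℝ) with hc
  have hcount : ∀ ω, (E.count a n ω : ℝ) = c (E.hist n ω) := by
    intro ω; simp only [hc]; rw [E.count_hist a n _ ω rfl]
  have hdr : (3 : ℝ) ≤ d := by exact_mod_cast hd
  have hnr : (1 : ℝ) ≤ n := by exact_mod_cast hn
  have h1 := E.integral_hist n (fun s => c s - n / d) {ω | E.g (n + 1) ω = a} (E.meas_g _ _)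
  have h2 := E.integral_hist n
    (fun s => (c s - n / d) * (alpha d p / n * (c s - n / d) + 1 / d)) Set.univ MeasurableSet.univ
  simp only [Set.indicator_univ, Set.inter_univ, Pi.one_apply, mul_one] at h2
  simp only [cen, hcount]
  rw [h1, h2]
  refine Finset.sum_congr rfl fun s _ => ?_
  have := E.update n hn (E.ext n s) a ha
  rw [← hist_eq_iff] at this
  rw [this, ← mul_assoc]
  congr 2
  change p * (c s / n) + (1 - p) / ((d : ℝ) - 1) * ((n - c s) / n) = _
  unfold alpha
  have : (d : ℝ) - 1 ≠ 0 := by linarith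
  have : (d : ℝ) ≠ 0 := by linarith
  have : (n : ℝ) ≠ 0 := by linarith
  field_simp
  ring

/-- second moments -/
def vv (E : ERW G d p Ω P) (a : G) (n : ℕ) : ℝ := ∫ ω, (E.cen a n ω) ^ 2 ∂P

lemma vv_succ [IsProbabilityMeasure P] (E : ERW G d p Ω P) (hd : 3 ≤ d) (n : ℕ) (hn : 1 ≤ n)
    (a : G) (ha : a ∈ E.S) :
    E.vv a (n + 1) ≤ (1 + 2 * alpha d p / n) * E.vv a n + 1 := by
  have hdr : (3 : ℝ) ≤ d := by exact_mod_cast hd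
  have hd1 : 1 / (d : ℝ) ≤ 1 := by rw [div_le_one (by linarith)]; linarith
  have hd0 : 0 ≤ 1 / (d : ℝ) := by positivity
  set A : Set Ω := {ω | E.g (n + 1) ω = a} with hA
  have hAm : MeasurableSet A := E.meas_g _ _
  have hsq := E.integrable_cen_sq a n
  have hcen : Integrable (E.cen a n) P := by
    refine Integrable.of_bound (E.meas_cen a n).aestronglyMeasurable (n : ℝ) ?_
    exact ae_of_all _ fun ω => by simpa using E.abs_cen_le a n ω
  have hcA : Integrable (fun ω => E.cen a n ω * A.indicator 1 ω) P := by
    refine Integrable.of_bound ((E.meas_cen a n).mul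
      (measurable_one.indicator hAm)).aestronglyMeasurable (n : ℝ) ?_
    refine ae_of_all _ fun ω => ?_
    by_cases h : ω ∈ A
    · simpa [h] using E.abs_cen_le a n ω
    · simp [h]
  have hstep := E.cond_step hd n hn a ha
  have e1 : ∫ ω, E.cen a n ω * (alpha d p / n * E.cen a n ω + 1 / d) ∂P
      = alpha d p / n * E.vv a n + 1 / d * ∫ ω, E.cen a n ω ∂P := by
    unfold vv
    rw [← integral_const_mul, ← integral_const_mul, ← integral_add (hsq.const_mul _)
      (hcen.const_mul _)]
    congr 1; funext ω; ring
  have e2 : E.vv a (n + 1) ≤ ∫ ω, ((E.cen a n ω ^ 2 + 2 * (E.cen a n ω * A.indicator 1 ω))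
      + (- (2 / d) * E.cen a n ω + 1)) ∂P := by
    unfold vv
    refine integral_mono (E.integrable_cen_sq a (n + 1))
      ((hsq.add (hcA.const_mul 2)).add ((hcen.const_mul _).add (integrable_const _))) fun ω => ?_
    have : E.cen a (n + 1) ω = E.cen a n ω + (A.indicator 1 ω - 1 / d) := by
      simp only [cen, count_succ]; push_cast; ring
    have hb : (A.indicator 1 ω - 1 / (d : ℝ)) ^ 2 ≤ 1 := by
      rw [sq_le_one_iff_abs_le_one, abs_le]
      by_cases h : ω ∈ A
      · simp only [h, Set.indicator_of_mem, Pi.one_apply]; constructor <;> linarith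
      · simp only [h, not_false_eq_true, Set.indicator_of_notMem]; constructor <;> linarith
    simp only [this]
    have : (2 / d : ℝ) = 2 * (1 / d) := by ring
    rw [this]
    nlinarith [hb]
  have i1 : Integrable (fun ω => 2 * (E.cen a n ω * A.indicator 1 ω)) P := hcA.const_mul 2
  have i2 : Integrable (fun ω => - (2 / (d : ℝ)) * E.cen a n ω) P := hcen.const_mul _
  have i3 : Integrable (fun ω => E.cen a n ω ^ 2 + 2 * (E.cen a n ω * A.indicator 1 ω)) P :=
    hsq.add i1
  have i4 : Integrable (fun ω => - (2 / (d : ℝ)) * E.cen a n ω + 1) P :=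
    i2.add (integrable_const _)
  rw [integral_add i3 i4, integral_add hsq i1, integral_add i2 (integrable_const _),
    integral_const_mul, integral_const_mul, hstep, e1] at e2
  simp only [integral_const, probReal_univ, smul_eq_mul, mul_one] at e2
  change _ ≤ E.vv a n + _ + _ at e2
  refine e2.trans (le_of_eq ?_)
  ring

lemma vv_one [IsProbabilityMeasure P] (E : ERW G d p Ω P) (a : G) : E.vv a 1 ≤ 1 := by
  unfold vv
  have : ∫ ω, (E.cen a 1 ω) ^ 2 ∂P ≤ ∫ _, (1 : ℝ) ∂P := by
    refine integral_mono (E.integrable_cen_sq a 1) (integrable_const _) fun ω => ?_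
    have := E.abs_cen_le a 1 ω
    rw [Nat.cast_one] at this
    exact (sq_le_one_iff_abs_le_one _).2 this
  simpa using this

lemma gamma_mem (E : ERW G d p Ω P) (n : ℕ) (ω : Ω) (h : E.pos n ω ≠ 1) :
    E.gammaStep n ω ∈ E.S := by
  have hex : ∃ s, s ∈ E.S ∧ (cayleyGraph E.S).dist 1 (s * E.pos n ω) + 1 = E.dist n ω := by
    have hc : (cayleyGraph E.S).Connected := E.tree.connected
    have key : ∀ w : G, w ≠ 1 → ∃ u, (cayleyGraph E.S).Adj w u ∧
        (cayleyGraph E.S).dist 1 u + 1 = (cayleyGraph E.S).dist 1 w := by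
      intro w hw
      obtain ⟨q, hq⟩ := hc.exists_walk_length_eq_dist w 1
      cases q with
      | nil => exact absurd rfl hw
      | cons hadj q =>
        rename_i u
        refine ⟨u, hadj, ?_⟩
        rw [SimpleGraph.Walk.length_cons] at hq
        have h1 := SimpleGraph.dist_le q
        have h2 : (cayleyGraph E.S).dist w 1 ≤ (cayleyGraph E.S).dist w u
            + (cayleyGraph E.S).dist u 1 := hc.dist_triangle
        rw [SimpleGraph.dist_eq_one_iff_adj.2 hadj] at h2
        rw [SimpleGraph.dist_comm (u := 1) (v := u), SimpleGraph.dist_comm (u := 1) (v := w)]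
        omega
    obtain ⟨u, hadj, hu⟩ := key _ h
    refine ⟨u * (E.pos n ω)⁻¹, ?_, by simpa [dist] using hu⟩
    rcases hadj.2 with h | h
    · exact h
    · have := E.symm_S _ h
      simpa using this
  exact (Classical.epsilon_spec_aux ⟨1⟩ _ hex).1

lemma term_sq_le (E : ERW G d p Ω P) (k : ℕ) (hk : 1 ≤ k) (ω : Ω) :
    ((E.ell k ω : ℝ) / k - (if 0 < E.dist k ω then 1 else 0) / d) ^ 2
      ≤ ∑ a ∈ E.S, (E.cen a k ω / k) ^ 2 := by
  by_cases h : E.pos k ω = 1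
  · have : E.dist k ω = 0 := by simp [dist, h]
    simp only [ell, h, this]
    simp
    exact Finset.sum_nonneg fun _ _ => by positivity
  · have hpos : 0 < E.dist k ω := by
      unfold dist
      exact E.tree.connected.pos_dist_of_ne (Ne.symm h)
    have hk' : (k : ℝ) ≠ 0 := by positivity
    have : (E.ell k ω : ℝ) / k - (if 0 < E.dist k ω then 1 else 0) / d
        = E.cen (E.gammaStep k ω) k ω / k := by
      simp only [ell, h, hpos, if_true, if_false, cen]
      field_simp
    rw [this]
    exact Finset.single_le_sum (f := fun a => (E.cen a k ω / k) ^ 2)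
      (fun _ _ => by positivity) (E.gamma_mem k ω h)

lemma sum_inv_sqrt_aux (n : ℕ) (hn : 1 ≤ n) :
    ∑ k ∈ Finset.range (n + 1), 1 / Real.sqrt k ≤ 2 * Real.sqrt n - 1 := by
  induction n, hn using Nat.le_induction with
  | base => norm_num [Finset.sum_range_succ]
  | succ n hn ih =>
    rw [Finset.sum_range_succ]
    have hu0 : 0 < Real.sqrt ((n + 1 : ℕ) : ℝ) := by positivity
    have hu : Real.sqrt ((n + 1 : ℕ) : ℝ) ^ 2 = n + 1 := by
      rw [Real.sq_sqrt (by positivity)]; push_cast; rfl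
    have ht : Real.sqrt (n : ℝ) ^ 2 = n := Real.sq_sqrt (by positivity)
    have : 1 / Real.sqrt ((n + 1 : ℕ) : ℝ)
        ≤ 2 * Real.sqrt ((n + 1 : ℕ) : ℝ) - 2 * Real.sqrt (n : ℝ) := by
      rw [div_le_iff₀ hu0]
      nlinarith [sq_nonneg (Real.sqrt ((n + 1 : ℕ) : ℝ) - Real.sqrt (n : ℝ))]
    linarith

lemma sum_inv_sqrt (n : ℕ) : ∑ k ∈ Finset.range n, 1 / Real.sqrt k ≤ 2 * Real.sqrt n := by
  rcases Nat.eq_zero_or_pos n with h | h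
  · subst h; simp
  have h1 := sum_inv_sqrt_aux n h
  rw [Finset.sum_range_succ] at h1
  have : 0 ≤ 1 / Real.sqrt (n : ℝ) := by positivity
  linarith

lemma Xi_sq_le (E : ERW G d p Ω P) (n : ℕ) (ω : Ω) :
    E.Xi n ω ^ 2 ≤ (1 / n ^ 2 * (2 * Real.sqrt n)) *
      ∑ k ∈ Finset.range n, Real.sqrt k * ∑ a ∈ E.S, (E.cen a k ω / k) ^ 2 := by
  set x : ℕ → ℝ := fun k => (E.ell k ω : ℝ) / k - (if 0 < E.dist k ω then 1 else 0) / d with hx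
  have hx0 : x 0 = 0 := by simp [hx, dist, pos]
  have hcs : (∑ k ∈ Finset.range n, x k) ^ 2 ≤ (∑ k ∈ Finset.range n, 1 / Real.sqrt k)
      * ∑ k ∈ Finset.range n, Real.sqrt k * x k ^ 2 := by
    refine Finset.sum_sq_le_sum_mul_sum_of_sq_le_mul _ (fun _ _ => by positivity)
      (fun _ _ => by positivity) fun k _ => ?_
    rcases Nat.eq_zero_or_pos k with h | h
    · subst h; simp [hx0]
    · have : Real.sqrt k ≠ 0 := by positivity
      refine le_of_eq ?_
      field_simp
  have h2 : ∑ k ∈ Finset.range n, Real.sqrt k * x k ^ 2 ≤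
      ∑ k ∈ Finset.range n, Real.sqrt k * ∑ a ∈ E.S, (E.cen a k ω / k) ^ 2 := by
    refine Finset.sum_le_sum fun k _ => ?_
    rcases Nat.eq_zero_or_pos k with h | h
    · subst h; simp
    · exact mul_le_mul_of_nonneg_left (E.term_sq_le k h ω) (Real.sqrt_nonneg _)
  have h3 : 0 ≤ ∑ k ∈ Finset.range n, Real.sqrt k * x k ^ 2 :=
    Finset.sum_nonneg fun _ _ => by positivity
  have : E.Xi n ω ^ 2 = 1 / n ^ 2 * (∑ k ∈ Finset.range n, x k) ^ 2 := by
    simp only [Xi, hx]; ring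
  rw [this, mul_assoc]
  refine mul_le_mul_of_nonneg_left (hcs.trans ?_) (by positivity)
  exact mul_le_mul (sum_inv_sqrt n) h2 h3 (by positivity)

lemma integrable_bound [IsProbabilityMeasure P] (E : ERW G d p Ω P) (n : ℕ) :
    Integrable (fun ω => ∑ k ∈ Finset.range n, Real.sqrt k * ∑ a ∈ E.S, (E.cen a k ω / k) ^ 2)
      P := by
  refine integrable_finsetSum _ fun k _ => Integrable.const_mul (integrable_finsetSum _ ?_) _
  intro a _
  simp only [div_pow]
  exact (E.integrable_cen_sq a k).div_const _

lemma integral_bound [IsProbabilityMeasure P] (E : ERW G d p Ω P) (n : ℕ) (h : ℝ) (hh : 0 ≤ h)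
    (H : ∀ a ∈ E.S, ∀ k : ℕ, 1 ≤ k → k ≤ n → E.vv a k ≤ h * k) :
    ∫ ω, ∑ k ∈ Finset.range n, Real.sqrt k * ∑ a ∈ E.S, (E.cen a k ω / k) ^ 2 ∂P
      ≤ d * h * (2 * Real.sqrt n) := by
  have hi : ∀ k : ℕ, ∀ a, Integrable (fun ω => (E.cen a k ω / k) ^ 2) P := by
    intro k a
    simp only [div_pow]
    exact (E.integrable_cen_sq a k).div_const _
  rw [integral_finsetSum _ fun k _ => Integrable.const_mul (integrable_finsetSum _ fun a _ => hi k a) _]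
  have : ∀ k ∈ Finset.range n, ∫ ω, Real.sqrt k * ∑ a ∈ E.S, (E.cen a k ω / k) ^ 2 ∂P
      ≤ d * h * (1 / Real.sqrt k) := by
    intro k hk
    rw [integral_const_mul, integral_finsetSum _ fun a _ => hi k a]
    rcases Nat.eq_zero_or_pos k with h0 | h0
    · subst h0; simp
    have hs : 0 < Real.sqrt k := by positivity
    have hs2 : (k : ℝ) = Real.sqrt k ^ 2 := (Real.sq_sqrt (by positivity)).symm
    have hle : ∀ a ∈ E.S, ∫ ω, (E.cen a k ω / k) ^ 2 ∂P ≤ h / k := by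
      intro a ha
      simp only [div_pow]
      rw [integral_div, div_le_div_iff₀ (by positivity) (by positivity)]
      have := H a ha k h0 (Finset.mem_range.1 hk).le
      unfold vv at this
      calc _ ≤ (h * k) * k := mul_le_mul_of_nonneg_right this (by positivity)
        _ = _ := by ring
    calc _ ≤ Real.sqrt k * ∑ a ∈ E.S, h / k :=
          mul_le_mul_of_nonneg_left (Finset.sum_le_sum hle) hs.le
      _ = d * h * (1 / Real.sqrt k) := by
          rw [Finset.sum_const, E.card_S, nsmul_eq_mul, hs2]
          simp only [Real.sqrt_sq hs.le]
          field_simp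
  refine (Finset.sum_le_sum this).trans ?_
  rw [← Finset.mul_sum]
  exact mul_le_mul_of_nonneg_left (sum_inv_sqrt n) (by positivity)

lemma main_bound [IsProbabilityMeasure P] (E : ERW G d p Ω P) (n : ℕ) (hn : 1 ≤ n) (h : ℝ)
    (hh : 0 ≤ h)
    (H : ∀ a ∈ E.S, ∀ k : ℕ, 1 ≤ k → k ≤ n → E.vv a k ≤ h * k) (r K : ℝ) (hr : 0 ≤ r)
    (hK : r ^ 2 * h ≤ K * n) (m : ℝ) (hm1 : 1 ≤ m) (hm2 : m < 2) :
    r ^ m * ∫ ω, |E.Xi n ω| ^ m ∂P ≤ 1 + 4 * d * K := by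
  have hn' : (0 : ℝ) < n := by exact_mod_cast hn
  rw [← integral_const_mul]
  set B : Ω → ℝ := fun ω => ∑ k ∈ Finset.range n, Real.sqrt k * ∑ a ∈ E.S, (E.cen a k ω / k) ^ 2
    with hB
  have hBi : Integrable B P := E.integrable_bound n
  have hBle : ∫ ω, B ω ∂P ≤ d * h * (2 * Real.sqrt n) := E.integral_bound n h hh H
  set c : ℝ := r ^ 2 * (1 / n ^ 2 * (2 * Real.sqrt n)) with hc
  have hc0 : 0 ≤ c := by positivity
  have hle : ∫ ω, r ^ m * |E.Xi n ω| ^ m ∂P ≤ ∫ ω, (1 + c * B ω) ∂P := by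
    refine integral_mono_of_nonneg (ae_of_all _ fun ω => ?_)
      ((integrable_const _).add (hBi.const_mul c)) (ae_of_all _ fun ω => ?_)
    · simp only [Pi.zero_apply]; positivity
    · have h1 : (r * |E.Xi n ω|) ^ m ≤ 1 + (r * |E.Xi n ω|) ^ 2 := by
        have h0 : 0 ≤ r * |E.Xi n ω| := by positivity
        rcases le_total (r * |E.Xi n ω|) 1 with h | h
        · have := Real.rpow_le_one h0 h (by linarith : 0 ≤ m)
          nlinarith [sq_nonneg (r * |E.Xi n ω|)]
        · have := Real.rpow_le_rpow_of_exponent_le h hm2.le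
          rw [Real.rpow_two] at this
          linarith
      have h2 := mul_le_mul_of_nonneg_left (E.Xi_sq_le n ω) (sq_nonneg r)
      simp only
      rw [← Real.mul_rpow hr (abs_nonneg _)]
      rw [mul_pow, sq_abs] at h1
      rw [← mul_assoc, ← hc] at h2
      linarith
  have i1 : Integrable (fun ω => c * B ω) P := hBi.const_mul c
  rw [integral_add (integrable_const _) i1, integral_const_mul c] at hle
  simp only [integral_const, probReal_univ, smul_eq_mul, mul_one] at hle
  refine hle.trans ?_
  have : c * ∫ ω, B ω ∂P ≤ 4 * d * K := by
    calc _ ≤ c * (d * h * (2 * Real.sqrt n)) := mul_le_mul_of_nonneg_left hBle hc0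
      _ = 4 * d * (r ^ 2 * h) / n ^ 2 * (Real.sqrt n) ^ 2 := by rw [hc]; ring
      _ = 4 * d * (r ^ 2 * h) / n := by rw [Real.sq_sqrt hn'.le]; field_simp
      _ ≤ 4 * d * (K * n) / n := by gcongr
      _ = 4 * d * K := by field_simp
  linarith

lemma alpha_ge (hd : 3 ≤ d) (hp0 : 0 ≤ p) : -(1 / 2) ≤ alpha d p := by
  have hdr : (3 : ℝ) ≤ d := by exact_mod_cast hd
  unfold alpha
  rw [le_div_iff₀ (by linarith)]
  nlinarith [mul_nonneg (by linarith : (0 : ℝ) ≤ d) hp0]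

lemma vv_le_of [IsProbabilityMeasure P] (E : ERW G d p Ω P) (hd : 3 ≤ d) (hp0 : 0 ≤ p)
    (a : G) (ha : a ∈ E.S) (f : ℕ → ℝ) (h1 : 1 ≤ f 1)
    (hf : ∀ n : ℕ, 1 ≤ n → (1 + 2 * alpha d p / n) * f n + 1 ≤ f (n + 1)) :
    ∀ n : ℕ, 1 ≤ n → E.vv a n ≤ f n := by
  intro n hn
  induction n, hn using Nat.le_induction with
  | base => exact (E.vv_one a).trans h1
  | succ n hn ih =>
    refine (E.vv_succ hd n hn a ha).trans (le_trans ?_ (hf n hn))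
    have hn' : (1 : ℝ) ≤ n := by exact_mod_cast hn
    have : 0 ≤ 1 + 2 * alpha d p / n := by
      have := alpha_ge (d := d) (p := p) hd hp0
      have : -1 ≤ 2 * alpha d p / n := by
        rw [le_div_iff₀ (by linarith)]; linarith
      linarith
    have := mul_le_mul_of_nonneg_left ih this
    linarith

end ERW

/-- concentration of `Ξ n`: for any `m ∈ [1,2)` there is `C > 0`
with `E|Ξ n|^m ≤ C * r n ^ (-m)` for all `n ≥ 1` (stated in the equivalent
product form `r n ^ m * E|Ξ n|^m ≤ C`). -/
theorem erw_Xi_moments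
    {G : Type*} [Group G] [DecidableEq G] {Ω : Type*} [MeasurableSpace Ω]
    {P : Measure Ω} [IsProbabilityMeasure P]
    (d : ℕ) (hd : 3 ≤ d) (p : ℝ) (hp0 : 0 ≤ p) (hp1 : p < 1)
    (E : ERW G d p Ω P) (m : ℝ) (hm1 : 1 ≤ m) (hm2 : m < 2) :
    ∃ C : ℝ, 0 < C ∧ ∀ n : ℕ, 1 ≤ n →
      rate p d n ^ m * ∫ ω, |E.Xi n ω| ^ m ∂P ≤ C := by
  have hdr : (3 : ℝ) ≤ d := by exact_mod_cast hd
  have hd1 : (0 : ℝ) < d - 1 := by linarith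
  have hal : ERW.alpha d p = ((d : ℝ) * p - 1) / ((d : ℝ) - 1) := rfl
  set α := ERW.alpha d p with hα
  have hαd : α * ((d : ℝ) - 1) = d * p - 1 := by rw [hal]; field_simp
  rcases lt_trichotomy p (((d : ℝ) + 1) / (2 * d)) with hp | hp | hp
  · -- subcritical
    have hp' : p * (2 * d) < d + 1 := by rwa [lt_div_iff₀ (by linarith)] at hp
    have ha : 0 < 1 - 2 * α := by
      by_contra hcon
      nlinarith
    set A : ℝ := 1 + 1 / (1 - 2 * α) with hA
    have hA1 : 1 ≤ A := by have : 0 < 1 / (1 - 2 * α) := by positivity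
                           linarith
    have hA2 : 1 ≤ A * (1 - 2 * α) := by rw [hA, add_mul, div_mul_cancel₀ _ ha.ne']; linarith
    refine ⟨1 + 4 * d * A, by positivity, fun n hn => ?_⟩
    refine E.main_bound n hn A (by linarith) ?_ _ A ?_ ?_ m hm1 hm2
    · intro a ha' k hk _
      refine E.vv_le_of hd hp0 a ha' (fun k => A * k) (by simpa using hA1) ?_ k hk
      intro j hj
      have hj' : (0 : ℝ) < j := by exact_mod_cast hj
      rw [← hα]
      push_cast
      have : (1 + 2 * α / j) * (A * j) = A * j + 2 * α * A := by field_simp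
      rw [this]
      linarith
    · simp only [rate, hp, if_true]; positivity
    · simp only [rate, hp, if_true]
      rw [Real.sq_sqrt (by positivity), mul_comm]
  · -- critical
    have hp' : p * (2 * d) = d + 1 := by rwa [eq_div_iff (by linarith)] at hp
    have ha : 2 * α = 1 := by
      have : (2 * α - 1) * ((d : ℝ) - 1) = 0 := by linarith
      rcases mul_eq_zero.1 this with h | h <;> linarith
    have hnl : ¬ p < ((d : ℝ) + 1) / (2 * d) := by linarith
    set K : ℝ := 1 + 1 / Real.log 2 with hK
    have hl2 : 0 < Real.log 2 := Real.log_pos (by norm_num)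
    refine ⟨1 + 4 * d * K, by positivity, fun n hn => ?_⟩
    have hn' : (1 : ℝ) ≤ n := by exact_mod_cast hn
    have hln : 0 ≤ Real.log n := Real.log_nonneg hn'
    have hrate : rate p d n = Real.sqrt ((n : ℝ) / Real.log n) := by
      unfold rate
      rw [if_neg hnl, if_pos hp]
    rw [hrate]
    refine E.main_bound n hn (1 + Real.log n) (by linarith) ?_ _ K (by positivity) ?_ m hm1 hm2
    · intro a ha' k hk hkn
      have hk' : (0 : ℝ) < k := by exact_mod_cast hk
      have hkn' : Real.log k ≤ Real.log n := Real.log_le_log hk' (by exact_mod_cast hkn)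
      refine le_trans (E.vv_le_of hd hp0 a ha' (fun k => (1 + Real.log k) * k) (by simp) ?_ k hk)
        (mul_le_mul_of_nonneg_right (by linarith) hk'.le)
      intro j hj
      have hj' : (0 : ℝ) < j := by exact_mod_cast hj
      rw [← hα, ha]
      push_cast
      have h1 : (1 + 1 / (j : ℝ)) * ((1 + Real.log j) * j) = (1 + Real.log j) * (j + 1) := by
        field_simp
      have h2 : 1 ≤ (Real.log (j + 1) - Real.log j) * (j + 1) := by
        have h3 := Real.log_le_sub_one_of_pos (show (0 : ℝ) < j / (j + 1) by positivity)
        rw [Real.log_div hj'.ne' (by positivity)] at h3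
        have h4 : (j : ℝ) / (j + 1) - 1 = - (1 / (j + 1)) := by field_simp; ring
        rw [h4] at h3
        have h5 : 1 / ((j : ℝ) + 1) ≤ Real.log (j + 1) - Real.log j := by linarith
        rwa [div_le_iff₀ (by positivity)] at h5
      rw [h1]
      linarith
    · rw [Real.sq_sqrt (by positivity)]
      rcases Nat.lt_or_ge n 2 with h | h
      · have : n = 1 := by omega
        subst this
        simp only [Nat.cast_one, Real.log_one, div_zero, zero_mul, mul_one]
        positivity
      · have hlog : Real.log 2 ≤ Real.log n :=
          Real.log_le_log (by norm_num) (by exact_mod_cast h)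
        have hlp : 0 < Real.log n := lt_of_lt_of_le hl2 hlog
        have e : (n : ℝ) / Real.log n * (1 + Real.log n) = (1 + 1 / Real.log n) * n := by
          field_simp
          ring
        rw [e, hK]
        gcongr
  · -- supercritical
    have hp' : d + 1 < p * (2 * d) := by rwa [div_lt_iff₀ (by linarith)] at hp
    have ha : 0 < 2 * α - 1 := by
      by_contra hcon
      nlinarith
    set B : ℝ := 1 / (2 * α - 1) with hB
    have hB0 : 0 < B := by positivity
    have hB1 : B * (2 * α - 1) = 1 := by rw [hB]; field_simp
    set A : ℝ := 1 + B with hA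
    have hA0 : 0 < A := by positivity
    refine ⟨1 + 4 * d * A, by positivity, fun n hn => ?_⟩
    have hn' : (0 : ℝ) < n := by exact_mod_cast hn
    have hrate : rate p d n = (n : ℝ) ^ (1 - α) := by
      unfold rate
      rw [if_neg (by linarith), if_neg (by linarith)]
      congr 1
      rw [hal]
      field_simp
      ring
    rw [hrate]
    refine E.main_bound n hn (A * (n : ℝ) ^ (2 * α - 1)) (by positivity) ?_ _ A (by positivity)
      ?_ m hm1 hm2
    · intro a ha' k hk hkn
      have hk' : (0 : ℝ) < k := by exact_mod_cast hk
      have hkn' : (k : ℝ) ^ (2 * α - 1) ≤ (n : ℝ) ^ (2 * α - 1) :=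
        Real.rpow_le_rpow hk'.le (by exact_mod_cast hkn) ha.le
      have key := E.vv_le_of hd hp0 a ha' (fun k => A * (k : ℝ) ^ (2 * α) - B * k)
        (by simp [hA]) ?_ k hk
      · have e : (k : ℝ) ^ (2 * α) = (k : ℝ) ^ (2 * α - 1) * k := by
          rw [Real.rpow_sub_one hk'.ne']; field_simp
        rw [e] at key
        have h1 : A * ((k : ℝ) ^ (2 * α - 1) * k) ≤ A * ((n : ℝ) ^ (2 * α - 1) * k) := by gcongr
        have h2 : 0 ≤ B * k := by positivity
        linarith
      · intro j hj
        have hj' : (0 : ℝ) < j := by exact_mod_cast hj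
        rw [← hα]
        push_cast
        have hbern : 1 + 2 * α * (1 / j) ≤ (1 + 1 / (j : ℝ)) ^ (2 * α) :=
          one_add_mul_self_le_rpow_one_add
            (by have : 0 < 1 / (j : ℝ) := by positivity
                linarith) (by linarith)
        have e : ((j : ℝ) + 1) ^ (2 * α) = (j : ℝ) ^ (2 * α) * (1 + 1 / (j : ℝ)) ^ (2 * α) := by
          rw [← Real.mul_rpow hj'.le (by positivity)]
          congr 1
          field_simp
        have h1 : (1 + 2 * α / j) * (A * (j : ℝ) ^ (2 * α) - B * j)
            = A * ((j : ℝ) ^ (2 * α) * (1 + 2 * α * (1 / j))) - B * j - 2 * α * B := by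
          field_simp
          ring
        have h2 : A * ((j : ℝ) ^ (2 * α) * (1 + 2 * α * (1 / j)))
            ≤ A * ((j : ℝ) ^ (2 * α) * (1 + 1 / (j : ℝ)) ^ (2 * α)) := by gcongr
        rw [h1, e]
        linarith
    · have e : ((n : ℝ) ^ (1 - α)) ^ 2 * (n : ℝ) ^ (2 * α - 1) = n := by
        rw [← Real.rpow_natCast, ← Real.rpow_mul hn'.le, ← Real.rpow_add hn']
        have : (1 - α) * ((2 : ℕ) : ℝ) + (2 * α - 1) = 1 := by push_cast; ring
        rw [this, Real.rpow_one]
      rw [mul_left_comm, e]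


end
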